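/- For every natural number n ≥ 1 and every real x, x^n - φ_{n-1}(x) = 2^{1-n} T_n(x). In particular, the truncation at k = n-1 recovers the optimal degree-(n-1) polynomial approximation of x^n, with supremum error 2^{1-n} over [-1, 1]. -/

import Mathlib

open Finset Polynomial

/-- Chebyshev coefficients of the monomial `x ^ n`. -/
noncomputable def chebCoeff (n j : ℕ) : ℝ :=
  if (n - j) % 2 = 0 then (2 : ℝ) ^ (1 - (n : ℤ)) * (n.choose ((n - j) / 2) : ℝ) else 0

/-- The truncated Chebyshev approximant `φ_k(x) = Σ'_{j=0}^{k} c_j T_j(x)`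
(the `j = 0` term halved). -/
noncomputable def phi (n k : ℕ) (x : ℝ) : ℝ :=
  chebCoeff n 0 / 2 * (Polynomial.Chebyshev.T ℝ (0 : ℤ)).eval x +
    ∑ j ∈ Finset.Icc 1 k, chebCoeff n j * (Polynomial.Chebyshev.T ℝ (j : ℤ)).eval x

lemma two_x_pow_mul_T (x : ℝ) (m : ℕ) : ∀ k : ℤ,
    (2 * x) ^ m * (Polynomial.Chebyshev.T ℝ k).eval x =
      ∑ i ∈ Finset.range (m + 1),
        (m.choose i : ℝ) * (Polynomial.Chebyshev.T ℝ (k + m - 2 * i)).eval x := by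
  induction m with
  | zero => intro k; simp
  | succ m ih =>
    intro k
    have h : 2 * x * (Polynomial.Chebyshev.T ℝ k).eval x =
        (Polynomial.Chebyshev.T ℝ (k + 1)).eval x + (Polynomial.Chebyshev.T ℝ (k - 1)).eval x := by
      rw [Polynomial.Chebyshev.T_add_one]; simp
    rw [pow_succ, mul_assoc, h, mul_add, ih, ih, Finset.sum_range_succ' _ (m + 1)]
    have e : ∀ i ∈ Finset.range (m + 1), ((m + 1).choose (i + 1) : ℝ) *
        (Polynomial.Chebyshev.T ℝ (k + (m + 1 : ℕ) - 2 * (i + 1 : ℕ))).eval x =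
        (m.choose i : ℝ) * (Polynomial.Chebyshev.T ℝ (k - 1 + m - 2 * i)).eval x +
        (m.choose (i + 1) : ℝ) *
          (Polynomial.Chebyshev.T ℝ (k + 1 + m - 2 * (i + 1 : ℕ))).eval x := by
      intro i _
      rw [Nat.choose_succ_succ]
      have h1 : k + ((m + 1 : ℕ) : ℤ) - 2 * ((i + 1 : ℕ) : ℤ) = k - 1 + m - 2 * i := by
        push_cast; ring
      have h2 : k + 1 + (m : ℤ) - 2 * ((i + 1 : ℕ) : ℤ) = k - 1 + m - 2 * i := by
        push_cast; ring
      rw [h1, h2]; push_cast; ring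
    rw [Finset.sum_congr rfl e, Finset.sum_add_distrib]
    have e2 := Finset.sum_range_succ' (fun i : ℕ => (m.choose i : ℝ) *
      (Polynomial.Chebyshev.T ℝ (k + 1 + m - 2 * (i : ℕ))).eval x) (m + 1)
    rw [Finset.sum_range_succ] at e2
    simp only [Nat.choose_succ_self, Nat.cast_zero, zero_mul, add_zero] at e2
    rw [e2]
    have h3 : k + ((m + 1 : ℕ) : ℤ) - 2 * ((0 : ℕ) : ℤ) = k + 1 + m := by
      push_cast; ring
    rw [h3]
    simp
    ring

lemma fiber_sum (n j : ℕ) (hj : 1 ≤ j) (hjn : j ≤ n) :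
    ∑ i ∈ (Finset.range (n + 1)).filter (fun i : ℕ => ((n : ℤ) - 2 * i).natAbs = j),
      (n.choose i : ℝ) = 2 ^ n * chebCoeff n j := by
  have hz : (2 : ℝ) ^ n * (2 : ℝ) ^ (1 - (n : ℤ)) = 2 := by
    rw [← zpow_natCast, ← zpow_add₀ (by norm_num)]; simp
  unfold chebCoeff
  split_ifs with hp
  · have hs : (Finset.range (n + 1)).filter (fun i : ℕ => ((n : ℤ) - 2 * i).natAbs = j) =
        {(n - j) / 2, n - (n - j) / 2} := by
      ext i; simp only [Finset.mem_filter, Finset.mem_range, Finset.mem_insert,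
        Finset.mem_singleton]; omega
    rw [hs, Finset.sum_pair (by omega), Nat.choose_symm (by omega), ← mul_assoc, hz]; ring
  · rw [mul_zero]
    apply Finset.sum_eq_zero
    intro i hi
    simp only [Finset.mem_filter, Finset.mem_range] at hi
    omega

lemma fiber_sum_zero (n : ℕ) :
    ∑ i ∈ (Finset.range (n + 1)).filter (fun i : ℕ => ((n : ℤ) - 2 * i).natAbs = 0),
      (n.choose i : ℝ) = 2 ^ n * (chebCoeff n 0 / 2) := by
  have hz : (2 : ℝ) ^ n * (2 : ℝ) ^ (1 - (n : ℤ)) = 2 := by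
    rw [← zpow_natCast, ← zpow_add₀ (by norm_num)]; simp
  unfold chebCoeff
  split_ifs with hp
  · have hs : (Finset.range (n + 1)).filter (fun i : ℕ => ((n : ℤ) - 2 * i).natAbs = 0) =
        {(n - 0) / 2} := by
      ext i; simp only [Finset.mem_filter, Finset.mem_range,
        Finset.mem_singleton]; omega
    rw [hs, Finset.sum_singleton, mul_div_assoc', ← mul_assoc, hz]; ring
  · rw [zero_div, mul_zero]
    apply Finset.sum_eq_zero
    intro i hi
    simp only [Finset.mem_filter, Finset.mem_range] at hi
    omega

lemma pow_eq_phi (n : ℕ) (x : ℝ) : x ^ n = phi n n x := by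
  have h := two_x_pow_mul_T x n 0
  have hm : ∀ i ∈ Finset.range (n + 1), ((n : ℤ) - 2 * i).natAbs ∈ Finset.range (n + 1) := by
    intro i hi
    simp only [Finset.mem_range] at *
    omega
  rw [← Finset.sum_fiberwise_of_maps_to hm] at h
  have e : ∀ j ∈ Finset.range (n + 1),
      ∑ i ∈ (Finset.range (n + 1)).filter (fun i : ℕ => ((n : ℤ) - 2 * i).natAbs = j),
        (n.choose i : ℝ) * (Polynomial.Chebyshev.T ℝ (0 + n - 2 * i)).eval x =
      (∑ i ∈ (Finset.range (n + 1)).filter (fun i : ℕ => ((n : ℤ) - 2 * i).natAbs = j),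
        (n.choose i : ℝ)) * (Polynomial.Chebyshev.T ℝ (j : ℤ)).eval x := by
    intro j _
    rw [Finset.sum_mul]
    apply Finset.sum_congr rfl
    intro i hi
    rw [← (Finset.mem_filter.mp hi).2, Polynomial.Chebyshev.T_natAbs, zero_add]
  rw [Finset.sum_congr rfl e, Finset.range_eq_Ico, Finset.sum_eq_sum_Ico_succ_bot (by omega),
    ← Finset.range_eq_Ico, fiber_sum_zero] at h
  have e2 : ∀ j ∈ Finset.Ico (0 + 1) (n + 1),
      (∑ i ∈ (Finset.range (n + 1)).filter (fun i : ℕ => ((n : ℤ) - 2 * i).natAbs = j),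
        (n.choose i : ℝ)) * (Polynomial.Chebyshev.T ℝ (j : ℤ)).eval x =
      2 ^ n * (chebCoeff n j * (Polynomial.Chebyshev.T ℝ (j : ℤ)).eval x) := by
    intro j hj
    rw [Finset.mem_Ico] at hj
    rw [fiber_sum n j (by omega) (by omega)]; ring
  have hI : Finset.Ico (0 + 1) (n + 1) = Finset.Icc 1 n := by
    ext i; simp only [Finset.mem_Ico, Finset.mem_Icc]; omega
  rw [Finset.sum_congr rfl e2, ← Finset.mul_sum, hI, mul_pow] at h
  have h2 : (2 : ℝ) ^ n ≠ 0 := by positivity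
  apply mul_left_cancel₀ h2
  unfold phi
  rw [mul_add]
  simp at h ⊢
  linarith

lemma main_identity (n : ℕ) (hn : 1 ≤ n) (x : ℝ) : x ^ n - phi n (n - 1) x =
      (2 : ℝ) ^ (1 - (n : ℤ)) * (Polynomial.Chebyshev.T ℝ (n : ℤ)).eval x := by
  obtain ⟨m, rfl⟩ : ∃ m, n = m + 1 := ⟨n - 1, by omega⟩
  rw [pow_eq_phi]
  unfold phi
  rw [Finset.sum_Icc_succ_top (by omega)]
  have : chebCoeff (m + 1) (m + 1) = (2 : ℝ) ^ (1 - ((m + 1 : ℕ) : ℤ)) := by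
    simp [chebCoeff]
  rw [this]
  simp only [Nat.add_sub_cancel]
  ring

/-- For `n ≥ 1`, `x^n - φ_{n-1}(x) = 2^(1-n) T_n(x)` for all real `x`; in particular the
supremum error of `φ_{n-1}` over `[-1, 1]` is `2^(1-n)`. -/
theorem truncation_at_n_sub_one (n : ℕ) (hn : 1 ≤ n) :
    (∀ x : ℝ, x ^ n - phi n (n - 1) x =
      (2 : ℝ) ^ (1 - (n : ℤ)) * (Polynomial.Chebyshev.T ℝ (n : ℤ)).eval x) ∧
    (⨆ x : Set.Icc (-1 : ℝ) 1, |(x : ℝ) ^ n - phi n (n - 1) x|) = (2 : ℝ) ^ (1 - (n : ℤ)) := by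
  refine ⟨main_identity n hn, ?_⟩
  have hpos : (0 : ℝ) < (2 : ℝ) ^ (1 - (n : ℤ)) := by positivity
  have hle : ∀ x : Set.Icc (-1 : ℝ) 1,
      |(x : ℝ) ^ n - phi n (n - 1) x| ≤ (2 : ℝ) ^ (1 - (n : ℤ)) := by
    intro x
    rw [main_identity n hn, abs_mul, abs_of_pos hpos]
    have h := Polynomial.Chebyshev.abs_eval_T_real_le_one (n : ℤ) (abs_le.mpr x.2)
    nlinarith
  haveI : Nonempty (Set.Icc (-1 : ℝ) 1) := ⟨⟨1, by norm_num⟩⟩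
  apply le_antisymm (ciSup_le hle)
  have h1 := le_ciSup (f := fun x : Set.Icc (-1 : ℝ) 1 => |(x : ℝ) ^ n - phi n (n - 1) x|)
    ⟨_, Set.forall_mem_range.mpr hle⟩ ⟨1, by norm_num⟩
  refine le_trans (le_of_eq ?_) h1
  simp only [main_identity n hn, Polynomial.Chebyshev.T_eval_one, mul_one, abs_of_pos hpos]
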